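/- Let p = p(n) ∈ [0,1] satisfy p(n)·(log n)^{1/3} → ∞ and limsup_{n→∞} p(n) < 1/2, let ε > 0 be such that p(n) ≤ 1/2 − ε for all sufficiently large n, and set δ := ε/5. Then there exists a constant C = C(ε) > 0 such that asymptotically almost surely G ~ G(n,p) satisfies all of the following: (a) every vertex v of G has degree d(v) with (1−δ)np ≤ d(v) ≤ (1+δ)np; (b) for every vertex set A with |A| ≥ δn, (1−δ)·C(|A|,2)·p ≤ e(A) ≤ (1+δ)·C(|A|,2)·p; (c) for every pair of disjoint vertex sets A, B with |A| ≥ C log n and |B| ≥ np², (1−δ)|A||B|p ≤ e(A,B) ≤ (1+δ)|A||B|p; (d) for every pair of disjoint vertex sets A, B with |A|, |B| ≥ n^{3/4}, (1−δ)|A||B|p ≤ e(A,B) ≤ (1+δ)|A||B|p. -/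

import Mathlib

open Filter

/-- The outneighbourhood `N1(v)` of `v` in the digraph with arc relation `D`. -/
def outNbr {V : Type*} (D : V → V → Prop) (v : V) : Set V := {w | w ≠ v ∧ D v w}

/-- The inneighbourhood `N⁻(v)` of `v`. -/
def inNbr {V : Type*} (D : V → V → Prop) (v : V) : Set V := {w | w ≠ v ∧ D w v}

/-- The second outneighbourhood `N2(v)` of `v`. -/
def outNbr2 {V : Type*} (D : V → V → Prop) (v : V) : Set V :=
  {w | w ∉ insert v (outNbr D v) ∧ ∃ u ∈ outNbr D v, D u w}

/-- `v` is a Seymour vertex: `|N2(v)| ≥ |N1(v)|`. -/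
def SeymourVertex {V : Type*} (D : V → V → Prop) (v : V) : Prop :=
  (outNbr D v).ncard ≤ (outNbr2 D v).ncard

/-- `v` is a Sullivan vertex: `|N2(v)| ≥ |N⁻(v)|`. -/
def SullivanVertex {V : Type*} (D : V → V → Prop) (v : V) : Prop :=
  (inNbr D v).ncard ≤ (outNbr2 D v).ncard

/-- An oriented graph: an asymmetric (hence irreflexive and loopless) arc relation. -/
def OrientedGraph {V : Type*} (D : V → V → Prop) : Prop := ∀ u v, D u v → ¬ D v u

/-- `D` is an orientation of the simple graph `G`. -/
def Orients {V : Type*} (D : V → V → Prop) (G : SimpleGraph V) : Prop :=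
  OrientedGraph D ∧ ∀ u v, G.Adj u v ↔ (D u v ∨ D v u)

/-- Strong connectivity of a digraph: every vertex reaches every other by a directed path. -/
def StrongConn {V : Type*} (D : V → V → Prop) : Prop := ∀ u v, Relation.ReflTransGen D u v

/-- The number of edges of `G` with one endpoint in `A` and the other in `B`
(counted via ordered pairs; equals `e(A,B)` for disjoint `A`, `B`). -/
noncomputable def eBtw {V : Type*} (G : SimpleGraph V) (A B : Set V) : ℕ :=
  {p : V × V | p.1 ∈ A ∧ p.2 ∈ B ∧ G.Adj p.1 p.2}.ncard

/-- The number of edges of `G` with both endpoints in `A`. -/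
noncomputable def eIn {V : Type*} (G : SimpleGraph V) (A : Set V) : ℕ :=
  {e | e ∈ G.edgeSet ∧ ∀ v ∈ e, v ∈ A}.ncard

open scoped Classical in
/-- The probability that the binomial random graph `G(n,p)` satisfies the property `P`. -/
noncomputable def gnpProb (n : ℕ) (p : ℝ) (P : SimpleGraph (Fin n) → Prop) : ℝ :=
  ∑ G : SimpleGraph (Fin n),
    if P G then p ^ G.edgeSet.ncard * (1 - p) ^ (n.choose 2 - G.edgeSet.ncard) else 0

/-!
A binomial variable with mean `m` has a moment generating function dominated by that of a Poisson
variable, so it leaves the window `(1 ± δ) m` with probability at most `2 exp (-c m)`, where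
`c = (min δ 1)² / 4`. Every quantity in the theorem counts the edges of `G(n,p)` inside a fixed set
of vertex pairs, so a union bound works as soon as the means dominate the logarithm of the number
of sets considered. For the `n` stars the means are of order `np`, which dominates `√n` because
`p √n → ∞`. For the at most `4 ^ n` vertex sets and pairs of vertex sets the means have to
dominate `n`; the critical case is (c), where they are at least `C n p³ log n`, and `p³ log n → ∞`.
-/

open MeasureTheory ProbabilityTheory Topology
open scoped unitInterval SimpleGraph

section Concentration

/-- `x` lies within a factor `1 ± δ` of the target value `m`. -/
def WithinFactor (δ m x : ℝ) : Prop := (1 - δ) * m ≤ x ∧ x ≤ (1 + δ) * m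

lemma WithinFactor.mono {δ δ' m x : ℝ} (h : WithinFactor δ m x) (hδ : δ ≤ δ') (hm : 0 ≤ m) :
    WithinFactor δ' m x :=
  ⟨h.1.trans' (by gcongr), h.2.trans (by gcongr)⟩

/-- The moment generating function of `X` is dominated by that of a Poisson variable with
parameter `m`. Binomial variables with mean `m` have this property, which is all that the
Chernoff bounds need. -/
structure HasSubpoissonMGF {Ω : Type*} [MeasurableSpace Ω] (X : Ω → ℝ) (m : ℝ) (μ : Measure Ω) :
    Prop where
  integrable_exp_mul (t : ℝ) : Integrable (fun ω ↦ Real.exp (t * X ω)) μ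
  mgf_le (t : ℝ) : mgf X μ t ≤ Real.exp (m * (Real.exp t - 1))

namespace HasSubpoissonMGF

variable {Ω : Type*} [MeasurableSpace Ω] {X : Ω → ℝ} {μ : Measure Ω} {δ m : ℝ}

lemma comp_measurePreserving {Ω' : Type*} [MeasurableSpace Ω'] {ν : Measure Ω'} {f : Ω' → Ω}
    (h : HasSubpoissonMGF X m μ) (hf : MeasurePreserving f ν μ) :
    HasSubpoissonMGF (X ∘ f) m ν where
  integrable_exp_mul t := hf.integrable_comp_of_integrable (h.integrable_exp_mul t)
  mgf_le t := by
    have hmeas := (h.integrable_exp_mul t).aestronglyMeasurable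
    rw [← hf.map_eq] at hmeas
    rw [← mgf_map hf.aemeasurable hmeas, hf.map_eq]
    exact h.mgf_le t

lemma sum_of_iIndepFun {ι : Type*} {X : ι → Ω → ℝ} {m : ι → ℝ} (hindep : iIndepFun X μ)
    (hmeas : ∀ i, Measurable (X i)) {S : Finset ι}
    (h : ∀ i ∈ S, HasSubpoissonMGF (X i) (m i) μ) :
    HasSubpoissonMGF (∑ i ∈ S, X i) (∑ i ∈ S, m i) μ where
  integrable_exp_mul t :=
    have := hindep.isProbabilityMeasure
    hindep.integrable_exp_mul_sum hmeas fun i hi ↦ (h i hi).integrable_exp_mul t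
  mgf_le t := by
    rw [hindep.mgf_sum hmeas, Finset.sum_mul, Real.exp_sum]
    exact Finset.prod_le_prod (fun _ _ ↦ mgf_nonneg) fun i hi ↦ (h i hi).mgf_le t

lemma mgf_le_exp_add_sq (h : HasSubpoissonMGF X m μ) (hm : 0 ≤ m) {t : ℝ} (ht : |t| ≤ 1) :
    mgf X μ t ≤ Real.exp (m * (t + t ^ 2)) := by
  have hexp : Real.exp t - 1 ≤ t + t ^ 2 := by
    linarith [(abs_le.1 (Real.abs_exp_sub_one_sub_id_le ht)).2]
  exact (h.mgf_le t).trans (by gcongr)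

section Tail

variable [IsFiniteMeasure μ]

lemma measureReal_ge_le (h : HasSubpoissonMGF X m μ) (hm : 0 ≤ m) (hδ₀ : 0 ≤ δ) (hδ₁ : δ ≤ 1) :
    μ.real {ω | (1 + δ) * m ≤ X ω} ≤ Real.exp (-(δ ^ 2 / 4 * m)) := by
  calc μ.real {ω | (1 + δ) * m ≤ X ω}
      ≤ Real.exp (-(δ / 2) * ((1 + δ) * m)) * mgf X μ (δ / 2) :=
        measure_ge_le_exp_mul_mgf _ (by positivity) (h.integrable_exp_mul _)
    _ ≤ Real.exp (-(δ / 2) * ((1 + δ) * m)) * Real.exp (m * (δ / 2 + (δ / 2) ^ 2)) := by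
        gcongr
        exact h.mgf_le_exp_add_sq hm (abs_le.2 ⟨by linarith, by linarith⟩)
    _ = Real.exp (-(δ ^ 2 / 4 * m)) := by
        rw [← Real.exp_add]
        ring_nf

lemma measureReal_le_le (h : HasSubpoissonMGF X m μ) (hm : 0 ≤ m) (hδ₀ : 0 ≤ δ) (hδ₁ : δ ≤ 1) :
    μ.real {ω | X ω ≤ (1 - δ) * m} ≤ Real.exp (-(δ ^ 2 / 4 * m)) := by
  calc μ.real {ω | X ω ≤ (1 - δ) * m}
      ≤ Real.exp (-(-(δ / 2)) * ((1 - δ) * m)) * mgf X μ (-(δ / 2)) :=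
        measure_le_le_exp_mul_mgf _ (by linarith) (h.integrable_exp_mul _)
    _ ≤ Real.exp (-(-(δ / 2)) * ((1 - δ) * m)) *
          Real.exp (m * (-(δ / 2) + (-(δ / 2)) ^ 2)) := by
        gcongr
        exact h.mgf_le_exp_add_sq hm (abs_le.2 ⟨by linarith, by linarith⟩)
    _ = Real.exp (-(δ ^ 2 / 4 * m)) := by
        rw [← Real.exp_add]
        ring_nf

lemma measureReal_not_withinFactor_le (h : HasSubpoissonMGF X m μ) (hm : 0 ≤ m) (hδ : 0 ≤ δ) :
    μ.real {ω | ¬ WithinFactor δ m (X ω)} ≤ 2 * Real.exp (-(min δ 1 ^ 2 / 4 * m)) := by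
  set d := min δ 1
  have hd₀ : 0 ≤ d := le_min hδ zero_le_one
  have hd₁ : d ≤ 1 := min_le_right δ 1
  have hsub : {ω | ¬ WithinFactor δ m (X ω)} ⊆
      {ω | (1 + d) * m ≤ X ω} ∪ {ω | X ω ≤ (1 - d) * m} := by
    intro ω hω
    by_contra hmem
    simp only [Set.mem_union, Set.mem_ofPred_eq, not_or, not_le] at hmem
    exact hω (WithinFactor.mono ⟨hmem.2.le, hmem.1.le⟩ (min_le_left δ 1) hm)
  calc μ.real {ω | ¬ WithinFactor δ m (X ω)}
      ≤ μ.real {ω | (1 + d) * m ≤ X ω} + μ.real {ω | X ω ≤ (1 - d) * m} :=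
        (measureReal_mono hsub).trans (measureReal_union_le _ _)
    _ ≤ 2 * Real.exp (-(d ^ 2 / 4 * m)) := by
        linarith [h.measureReal_ge_le hm hd₀ hd₁, h.measureReal_le_le hm hd₀ hd₁]

lemma measureReal_exists_not_withinFactor_le {ι : Type*} [Finite ι] {X : ι → Ω → ℝ} {m : ι → ℝ}
    {M : ℝ} (h : ∀ i, HasSubpoissonMGF (X i) (m i) μ) (hM : 0 ≤ M) (hm : ∀ i, M ≤ m i)
    (hδ : 0 ≤ δ) :
    μ.real {ω | ∃ i, ¬ WithinFactor δ (m i) (X i ω)} ≤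
      Nat.card ι * (2 * Real.exp (-(min δ 1 ^ 2 / 4 * M))) := by
  have := Fintype.ofFinite ι
  calc μ.real {ω | ∃ i, ¬ WithinFactor δ (m i) (X i ω)}
      ≤ ∑ i, μ.real {ω | ¬ WithinFactor δ (m i) (X i ω)} := by
        rw [Set.ofPred_exists]
        exact measureReal_iUnion_fintype_le _
    _ ≤ ∑ _ : ι, 2 * Real.exp (-(min δ 1 ^ 2 / 4 * M)) := by
        gcongr with i
        refine ((h i).measureReal_not_withinFactor_le (hM.trans (hm i)) hδ).trans ?_
        gcongr
        exact hm i
    _ = Nat.card ι * (2 * Real.exp (-(min δ 1 ^ 2 / 4 * M))) := by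
        rw [Finset.sum_const, nsmul_eq_mul, Finset.card_univ, Nat.card_eq_fintype_card]

end Tail

end HasSubpoissonMGF

end Concentration

section AsymptoticallyAlmostSurely

variable {Ω : ℕ → Type*} [∀ n, MeasurableSpace (Ω n)] {μ : ∀ n, Measure (Ω n)}
  {P Q : ∀ n, Ω n → Prop}

/-- The property `P n` holds asymptotically almost surely under `μ n`. Phrasing this as "the
probability of failure tends to `0`" makes it stable under conjunction without measurability
assumptions. -/
def AsympAlmostSurely (μ : ∀ n, Measure (Ω n)) (P : ∀ n, Ω n → Prop) : Prop :=
  Tendsto (fun n ↦ (μ n).real {ω | ¬ P n ω}) atTop (𝓝 0)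

namespace AsympAlmostSurely

lemma tendsto_measureReal [∀ n, IsProbabilityMeasure (μ n)] (h : AsympAlmostSurely μ P)
    (hP : ∀ n, MeasurableSet {ω | P n ω}) :
    Tendsto (fun n ↦ (μ n).real {ω | P n ω}) atTop (𝓝 1) := by
  simpa [← Set.compl_ofPred, probReal_compl_eq_one_sub (hP _)] using h.const_sub 1

lemma and (hP : AsympAlmostSurely μ P) (hQ : AsympAlmostSurely μ Q) :
    AsympAlmostSurely μ fun n ω ↦ P n ω ∧ Q n ω := by
  refine squeeze_zero (fun _ ↦ measureReal_nonneg) (fun n ↦ ?_) (by simpa using hP.add hQ)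
  simp only [not_and_or]
  exact measureReal_union_le _ _

lemma mono [∀ n, IsFiniteMeasure (μ n)] (h : AsympAlmostSurely μ P)
    (hPQ : ∀ᶠ n in atTop, ∀ ω, P n ω → Q n ω) :
    AsympAlmostSurely μ Q := by
  refine squeeze_zero' (.of_forall fun _ ↦ measureReal_nonneg) ?_ h
  filter_upwards [hPQ] with n hn
  exact measureReal_mono fun ω hQ hP ↦ hQ (hn ω hP)

end AsympAlmostSurely

lemma asympAlmostSurely_forall_withinFactor [∀ n, IsFiniteMeasure (μ n)] {ι : ℕ → Type*}
    [∀ n, Finite (ι n)] {X : ∀ n, ι n → Ω n → ℝ} {m : ∀ n, ι n → ℝ} {a : ℕ → ℝ} {δ : ℝ}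
    (hX : ∀ n i, HasSubpoissonMGF (X n i) (m n i) (μ n)) (ha : Tendsto a atTop atTop)
    (hcard : ∀ n, (Nat.card (ι n) : ℝ) ≤ Real.exp (a n))
    (hm : ∀ K : ℝ, ∀ᶠ n in atTop, ∀ i, K * a n ≤ m n i) (hδ : 0 < δ) :
    AsympAlmostSurely μ fun n ω ↦ ∀ i, WithinFactor δ (m n i) (X n i ω) := by
  set c := min δ 1 ^ 2 / 4
  have hc : 0 < c := by positivity
  have hlim : Tendsto (fun n ↦ 2 * Real.exp (-a n)) atTop (𝓝 0) := by
    simpa using (Real.tendsto_exp_neg_atTop_nhds_zero.comp ha).const_mul 2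
  refine squeeze_zero' (.of_forall fun _ ↦ measureReal_nonneg) ?_ hlim
  filter_upwards [hm (2 / c), ha.eventually_ge_atTop 0] with n hmn han
  simp only [not_forall]
  calc (μ n).real {ω | ∃ i, ¬ WithinFactor δ (m n i) (X n i ω)}
      ≤ Nat.card (ι n) * (2 * Real.exp (-(c * (2 / c * a n)))) :=
        HasSubpoissonMGF.measureReal_exists_not_withinFactor_le (hX n) (by positivity) hmn hδ.le
    _ ≤ Real.exp (a n) * (2 * Real.exp (-(c * (2 / c * a n)))) := by
        gcongr
        exact hcard n
    _ = 2 * Real.exp (-a n) := by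
        rw [mul_left_comm, ← Real.exp_add]
        congr 2
        field_simp
        ring

end AsymptoticallyAlmostSurely

section RandomGraph

open Classical in
lemma hasSubpoissonMGF_ite_bernoulliMeasure (p : I) :
    HasSubpoissonMGF (fun q : Prop ↦ if q then (1 : ℝ) else 0) p Ber(True, False, p) where
  integrable_exp_mul _ := .of_finite
  mgf_le t := by
    have hint (ν : Measure Prop) [IsFiniteMeasure ν] :
        Integrable (fun q : Prop ↦ Real.exp (t * if q then (1 : ℝ) else 0)) ν := .of_finite
    calc mgf (fun q : Prop ↦ if q then (1 : ℝ) else 0) Ber(True, False, p) t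
        = p * (Real.exp t - 1) + 1 := by
          rw [bernoulliMeasure_def, mgf_add_measure (hint _) (hint _)]
          simp only [mgf, mul_ite, mul_one, mul_zero, integral_smul_nnreal_measure,
            integral_dirac, ↓reduceIte, NNReal.smul_def, unitInterval.coe_toNNReal, smul_eq_mul,
            Real.exp_zero, unitInterval.coe_symm_eq]
          ring
      _ ≤ Real.exp (p * (Real.exp t - 1)) := Real.add_one_le_exp _

open Classical in
lemma ncard_inter_eq_sum_ite {ι : Type*} (S : Finset ι) (s : Set ι) :
    ((s ∩ S).ncard : ℝ) = ∑ i ∈ S, if i ∈ s then 1 else 0 := by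
  rw [Finset.sum_boole, ← Set.ncard_coe_finset, Finset.coe_filter]
  congr 2
  ext i
  exact and_comm

lemma hasSubpoissonMGF_ncard_inter_setBernoulli {ι : Type*} {u : Set ι} (p : I) {S : Finset ι}
    (hS : ↑S ⊆ u) :
    HasSubpoissonMGF (fun s : Set ι ↦ ((s ∩ S).ncard : ℝ)) (p * S.card) setBer(u, p) := by
  classical
  let ν := Measure.infinitePi fun i : ι ↦ Ber(i ∈ u, False, p)
  let X (i : ι) (q : ι → Prop) : ℝ := if q i then 1 else 0
  have hindep : iIndepFun X ν :=
    iIndepFun_infinitePi (X := fun _ q ↦ if q then (1 : ℝ) else 0) fun _ ↦ .of_discrete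
  have hmeas (i : ι) : Measurable (X i) :=
    (Measurable.of_discrete (f := fun q : Prop ↦ if q then (1 : ℝ) else 0)).comp
      (measurable_pi_apply i)
  have hcoord (i : ι) (hi : i ∈ S) : HasSubpoissonMGF (X i) p ν :=
    (hasSubpoissonMGF_ite_bernoulliMeasure p).comp_measurePreserving (f := fun q : ι → Prop ↦ q i)
      (by simpa [hS hi] using
        measurePreserving_eval_infinitePi (fun i : ι ↦ Ber(i ∈ u, False, p)) i)
  have hmem : MeasurePreserving (fun (s : Set ι) i ↦ i ∈ s) setBer(u, p) ν :=
    MeasurePreserving.symm MeasurableEquiv.setOfPred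
      ⟨MeasurableEquiv.setOfPred.measurable, (setBernoulli_eq_map u p).symm⟩
  have hsum := (HasSubpoissonMGF.sum_of_iIndepFun hindep hmeas hcoord).comp_measurePreserving hmem
  convert hsum using 1
  · ext s
    simp [ncard_inter_eq_sum_ite, X]
  · simp [mul_comm]

variable {V : Type*}

lemma measurePreserving_edgeSet_binomialRandom [Countable V] (p : I) :
    MeasurePreserving SimpleGraph.edgeSet G(V, p) setBer(Sym2.diagSetᶜ, p) := by
  refine ⟨SimpleGraph.measurable_edgeSet, ?_⟩
  rw [SimpleGraph.binomialRandom, SimpleGraph.measurableEmbedding_edgeSet.map_comap]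
  refine Measure.restrict_eq_self_of_ae_mem ?_
  filter_upwards [setBernoulli_ae_subset] with s hs
  refine ⟨.fromEdgeSet s, ?_⟩
  rw [SimpleGraph.edgeSet_fromEdgeSet]
  exact sdiff_eq_left.2 (Set.subset_compl_iff_disjoint_right.1 hs)

lemma hasSubpoissonMGF_ncard_edgeSet_inter [Finite V] (p : I) (T : Set (Sym2 V)) :
    HasSubpoissonMGF (fun G : SimpleGraph V ↦ ((G.edgeSet ∩ T).ncard : ℝ))
      (((⊤ : SimpleGraph V).edgeSet ∩ T).ncard * p) G(V, p) := by
  have hT : (T ∩ Sym2.diagSetᶜ).Finite := Set.toFinite _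
  have h := (hasSubpoissonMGF_ncard_inter_setBernoulli (u := Sym2.diagSetᶜ) p
    (S := hT.toFinset) (by simp)).comp_measurePreserving
      (measurePreserving_edgeSet_binomialRandom (V := V) p)
  convert h using 1
  · ext G
    have hG : G.edgeSet ⊆ Sym2.diagSetᶜ := G.edgeSet_subset_compl_diagSet
    rw [Function.comp_apply, hT.coe_toFinset, ← Set.inter_assoc, Set.inter_right_comm,
      Set.inter_eq_left.2 hG]
  · rw [SimpleGraph.edgeSet_top, ← Set.ncard_eq_toFinset_card _ hT, Set.inter_comm, mul_comm]

lemma eBtw_eq_ncard_edgeSet_inter {A B : Set V} (h : Disjoint A B) (G : SimpleGraph V) :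
    eBtw G A B = (G.edgeSet ∩ Sym2.mk.uncurry '' A ×ˢ B).ncard := by
  have hinj : Set.InjOn Sym2.mk.uncurry (A ×ˢ B) := by
    rintro ⟨a, b⟩ ⟨ha, -⟩ ⟨c, d⟩ ⟨-, hd⟩ he
    rcases Sym2.eq_iff.1 he with ⟨rfl, rfl⟩ | ⟨rfl, rfl⟩
    · rfl
    · exact absurd hd (h.notMem_of_mem_left ha)
  have hsub : {x : V × V | x.1 ∈ A ∧ x.2 ∈ B ∧ G.Adj x.1 x.2} ⊆ A ×ˢ B := fun _ hx ↦ ⟨hx.1, hx.2.1⟩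
  rw [eBtw, ← (hinj.mono hsub).ncard_image]
  congr 1
  ext e
  constructor
  · rintro ⟨x, ⟨ha, hb, hadj⟩, rfl⟩
    exact ⟨hadj, x, ⟨ha, hb⟩, rfl⟩
  · rintro ⟨hadj, x, ⟨ha, hb⟩, rfl⟩
    exact ⟨x, ⟨ha, hb, hadj⟩, rfl⟩

lemma eBtw_top {A B : Set V} (h : Disjoint A B) : eBtw ⊤ A B = A.ncard * B.ncard := by
  rw [eBtw, ← Set.ncard_prod]
  congr 1
  ext ⟨a, b⟩
  exact and_congr_right fun ha ↦ and_iff_left_of_imp fun hb ↦ h.ne_of_mem ha hb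

lemma eIn_top [Finite V] (A : Set V) : eIn ⊤ A = A.ncard.choose 2 := by
  classical
  have := Fintype.ofFinite V
  rw [eIn, Set.ncard_eq_toFinset_card' A, ← Sym2.card_image_offDiag, ← Set.ncard_coe_finset]
  congr 1
  ext e
  induction e with
  | _ a b =>
    simp only [SimpleGraph.edgeSet_top, Set.mem_compl_iff, Sym2.mem_diagSet, Set.mem_ofPred_eq,
      Sym2.mk_isDiag_iff, Sym2.mem_iff, forall_eq_or_imp, forall_eq, Finset.coe_image,
      Finset.coe_offDiag, Set.coe_toFinset, Set.mem_image, Set.mem_offDiag, Prod.exists,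
      Function.uncurry_apply_pair, Sym2.eq_iff]
    grind

lemma ncard_neighborSet_eq_eBtw (G : SimpleGraph V) (v : V) :
    (G.neighborSet v).ncard = eBtw G {v} {v}ᶜ := by
  rw [eBtw, ← Set.ncard_image_of_injective _ (Prod.mk_right_injective v)]
  congr 1
  ext ⟨a, b⟩
  simp only [Set.mem_image, SimpleGraph.mem_neighborSet, Prod.mk.injEq, Set.mem_singleton_iff,
    Set.mem_compl_iff, Set.mem_ofPred_eq]
  grind [G.ne_of_adj]

lemma hasSubpoissonMGF_eBtw [Finite V] (p : I) {A B : Set V} (h : Disjoint A B) :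
    HasSubpoissonMGF (fun G : SimpleGraph V ↦ (eBtw G A B : ℝ)) (A.ncard * B.ncard * p)
      G(V, p) := by
  have hinter := hasSubpoissonMGF_ncard_edgeSet_inter p (Sym2.mk.uncurry '' A ×ˢ B)
  simp only [← eBtw_eq_ncard_edgeSet_inter h, eBtw_top h] at hinter
  exact_mod_cast hinter

lemma hasSubpoissonMGF_ncard_neighborSet [Finite V] (p : I) (v : V) :
    HasSubpoissonMGF (fun G : SimpleGraph V ↦ ((G.neighborSet v).ncard : ℝ))
      ((Nat.card V - 1) * p) G(V, p) := by
  have : Nonempty V := ⟨v⟩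
  convert hasSubpoissonMGF_eBtw p (disjoint_compl_right (a := {v})) using 1
  · simp [ncard_neighborSet_eq_eBtw]
  · rw [Set.ncard_singleton, Set.ncard_compl, Set.ncard_singleton, Nat.cast_pred Nat.card_pos,
      Nat.cast_one, one_mul]

lemma hasSubpoissonMGF_eIn [Finite V] (p : I) (A : Set V) :
    HasSubpoissonMGF (fun G : SimpleGraph V ↦ (eIn G A : ℝ)) (A.ncard.choose 2 * p) G(V, p) := by
  rw [← eIn_top]
  exact hasSubpoissonMGF_ncard_edgeSet_inter p {e | ∀ v ∈ e, v ∈ A}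

instance [Countable V] : MeasurableSingletonClass (SimpleGraph V) where
  measurableSet_singleton G := by
    rw [← SimpleGraph.edgeSet_injective.preimage_image {G}, Set.image_singleton]
    exact SimpleGraph.measurable_edgeSet (measurableSet_singleton _)

lemma gnpProb_eq_measureReal_binomialRandom (n : ℕ) (p : I) (P : SimpleGraph (Fin n) → Prop) :
    gnpProb n p P = G(Fin n, p).real {G | P G} := by
  classical
  have hsingleton (G : SimpleGraph (Fin n)) : G(Fin n, p).real {G} =
      p ^ G.edgeSet.ncard * (1 - p : ℝ) ^ (n.choose 2 - G.edgeSet.ncard) := by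
    simp [measureReal_def]
  have hfilter : {G | P G} = (Finset.univ.filter P : Set (SimpleGraph (Fin n))) := by simp
  rw [hfilter, ← sum_measureReal_singleton, Finset.sum_filter]
  simp only [gnpProb, hsingleton]

end RandomGraph

section Pseudorandomness

lemma tendsto_cube_mul_log_of_tendsto_mul_log_rpow {p : ℕ → ℝ}
    (hgrow : Tendsto (fun n : ℕ ↦ p n * Real.log n ^ ((1 : ℝ) / 3)) atTop atTop) :
    Tendsto (fun n : ℕ ↦ p n ^ 3 * Real.log n) atTop atTop := by
  refine ((tendsto_pow_atTop three_ne_zero).comp hgrow).congr fun n ↦ ?_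
  rw [Function.comp_apply, mul_pow, ← Real.rpow_natCast (_ ^ _), ← Real.rpow_mul (by positivity)]
  norm_num

lemma tendsto_mul_sqrt_of_tendsto_mul_log_rpow {p : ℕ → ℝ} (hp : ∀ n, 0 ≤ p n)
    (hgrow : Tendsto (fun n : ℕ ↦ p n * Real.log n ^ ((1 : ℝ) / 3)) atTop atTop) :
    Tendsto (fun n : ℕ ↦ p n * √n) atTop atTop := by
  refine tendsto_atTop_mono' _ ?_ hgrow
  have hlog : ∀ᶠ x : ℝ in atTop, Real.log x ^ ((1 : ℝ) / 3) ≤ x ^ ((1 : ℝ) / 2) := by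
    filter_upwards [(isLittleO_log_rpow_rpow_atTop (1 / 3) (half_pos one_pos)).bound one_pos,
      eventually_ge_atTop 1] with x hx hx₁
    simpa [abs_of_nonneg, Real.rpow_nonneg, Real.log_nonneg hx₁, zero_le_one.trans hx₁] using hx
  filter_upwards [tendsto_natCast_atTop_atTop.eventually hlog] with n hn
  rw [Real.sqrt_eq_rpow]
  exact mul_le_mul_of_nonneg_left hn (hp n)

variable {p : ℕ → I} {δ : ℝ}

lemma card_set_fin_le_exp (n : ℕ) : (Nat.card (Set (Fin n)) : ℝ) ≤ Real.exp n := by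
  calc (Nat.card (Set (Fin n)) : ℝ) = 2 ^ n := by simp
    _ ≤ Real.exp 1 ^ n := by gcongr; linarith [Real.add_one_le_exp 1]
    _ = Real.exp n := by rw [← Real.exp_nat_mul, mul_one]

lemma asympAlmostSurely_withinFactor_eIn {S : ∀ n, Set (Fin n) → Prop} (hδ : 0 < δ)
    (hS : ∀ K : ℝ, ∀ᶠ n : ℕ in atTop, ∀ A, S n A → K * n ≤ A.ncard.choose 2 * p n) :
    AsympAlmostSurely (fun n ↦ G(Fin n, p n)) fun n G ↦ ∀ A, S n A →
      WithinFactor δ (A.ncard.choose 2 * p n) (eIn G A) := by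
  have hcard (n : ℕ) : (Nat.card {A // S n A} : ℝ) ≤ Real.exp n :=
    (card_set_fin_le_exp n).trans' <| by exact_mod_cast Finite.card_subtype_le _
  have hmean (K : ℝ) : ∀ᶠ n : ℕ in atTop, ∀ A : {A // S n A},
      K * n ≤ A.1.ncard.choose 2 * p n := by
    simpa only [Subtype.forall] using hS K
  have hfamily := asympAlmostSurely_forall_withinFactor
    (X := fun n (A : {A // S n A}) G ↦ (eIn G A.1 : ℝ))
    (fun n A ↦ hasSubpoissonMGF_eIn (p n) A.1) tendsto_natCast_atTop_atTop hcard hmean hδ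
  simpa only [Subtype.forall] using hfamily

lemma asympAlmostSurely_withinFactor_eBtw {S : ∀ n, Set (Fin n) → Set (Fin n) → Prop} (hδ : 0 < δ)
    (hS : ∀ K : ℝ, ∀ᶠ n : ℕ in atTop, ∀ A B, S n A B → K * n ≤ A.ncard * B.ncard * p n) :
    AsympAlmostSurely (fun n ↦ G(Fin n, p n)) fun n G ↦ ∀ A B, Disjoint A B → S n A B →
      WithinFactor δ (A.ncard * B.ncard * p n) (eBtw G A B) := by
  let ι (n : ℕ) := {AB : Set (Fin n) × Set (Fin n) // Disjoint AB.1 AB.2 ∧ S n AB.1 AB.2}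
  have hcard (n : ℕ) : (Nat.card (ι n) : ℝ) ≤ Real.exp (2 * n) :=
    calc (Nat.card (ι n) : ℝ) ≤ Nat.card (Set (Fin n) × Set (Fin n)) := by
          exact_mod_cast Finite.card_subtype_le _
      _ ≤ Real.exp n * Real.exp n := by
          rw [Nat.card_prod, Nat.cast_mul]
          gcongr <;> exact card_set_fin_le_exp n
      _ = Real.exp (2 * n) := by rw [← Real.exp_add, two_mul]
  have hmean (K : ℝ) : ∀ᶠ n : ℕ in atTop, ∀ AB : ι n,
      K * (2 * n) ≤ AB.1.1.ncard * AB.1.2.ncard * p n := by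
    filter_upwards [hS (K * 2)] with n hn AB
    simpa only [mul_assoc] using hn _ _ AB.2.2
  have hlim : Tendsto (fun n : ℕ ↦ (2 * n : ℝ)) atTop atTop :=
    tendsto_natCast_atTop_atTop.const_mul_atTop two_pos
  have hfamily := asympAlmostSurely_forall_withinFactor
    (X := fun n (AB : ι n) G ↦ (eBtw G AB.1.1 AB.1.2 : ℝ))
    (fun n AB ↦ hasSubpoissonMGF_eBtw (p n) AB.2.1) hlim hcard hmean hδ
  exact hfamily.mono (.of_forall fun n G h A B hAB hS ↦ h ⟨(A, B), hAB, hS⟩)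

lemma asympAlmostSurely_withinFactor_ncard_neighborSet
    (hp : Tendsto (fun n : ℕ ↦ p n * √n) atTop atTop) (hδ : 0 < δ) :
    AsympAlmostSurely (fun n ↦ G(Fin n, p n)) fun n G ↦ ∀ v,
      WithinFactor δ (n * p n) (G.neighborSet v).ncard := by
  have hcard (n : ℕ) : (Nat.card (Fin n) : ℝ) ≤ Real.exp (2 * √n) :=
    calc (Nat.card (Fin n) : ℝ) = √n ^ 2 := by rw [Nat.card_fin, Real.sq_sqrt n.cast_nonneg]
      _ ≤ Real.exp √n ^ 2 := by gcongr; linarith [Real.add_one_le_exp √n]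
      _ = Real.exp (2 * √n) := by rw [← Real.exp_nat_mul, Nat.cast_ofNat]
  have hmean (K : ℝ) : ∀ᶠ n : ℕ in atTop, ∀ _ : Fin n,
      K * (2 * √n) ≤ (Nat.card (Fin n) - 1) * p n := by
    simp only [Nat.card_fin]
    filter_upwards [hp.eventually_ge_atTop (4 * |K|), eventually_ge_atTop 2] with n hpn hn _
    have hn' : (2 : ℝ) ≤ n := by exact_mod_cast hn
    calc K * (2 * √n) ≤ 4 * |K| * √n / 2 := by nlinarith [le_abs_self K, Real.sqrt_nonneg n]
      _ ≤ p n * √n * √n / 2 := by gcongr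
      _ = n / 2 * p n := by rw [mul_assoc, Real.mul_self_sqrt n.cast_nonneg]; ring
      _ ≤ (n - 1) * p n := by gcongr; exacts [(p n).2.1, by linarith]
  have hlim : Tendsto (fun n : ℕ ↦ 2 * √n) atTop atTop :=
    (Real.tendsto_sqrt_atTop.comp tendsto_natCast_atTop_atTop).const_mul_atTop two_pos
  -- Passing from `δ / 2` to `δ` absorbs the difference between the mean `(n - 1) p` and `n p`.
  refine (asympAlmostSurely_forall_withinFactor
    (fun n ↦ hasSubpoissonMGF_ncard_neighborSet (p n)) hlim hcard hmean (half_pos hδ)).mono ?_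
  filter_upwards [tendsto_natCast_atTop_atTop.eventually_ge_atTop (2 / δ)] with n hn G hG v
  rw [Nat.card_fin] at hG
  have hδn : 2 ≤ n * δ := (div_le_iff₀ hδ).1 hn
  have hp₀ : 0 ≤ (p n : ℝ) := (p n).2.1
  exact ⟨(hG v).1.trans' (by nlinarith), (hG v).2.trans (by nlinarith)⟩

lemma eventually_mul_le_choose_two_mul (hp : Tendsto (fun n : ℕ ↦ p n * √n) atTop atTop)
    (hδ : 0 < δ) (K : ℝ) :
    ∀ᶠ n : ℕ in atTop, ∀ A : Set (Fin n), δ * n ≤ A.ncard →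
      K * n ≤ A.ncard.choose 2 * p n := by
  filter_upwards [hp.eventually_ge_atTop (4 * K / δ ^ 2), eventually_ge_atTop 1,
    tendsto_natCast_atTop_atTop.eventually_ge_atTop (2 / δ)] with n hpn hn hnδ A hA
  have hp₀ : 0 ≤ (p n : ℝ) := (p n).2.1
  have hsqrt : √n ≤ n := Real.sqrt_le_self_iff.2 (.inr (by exact_mod_cast hn))
  have hA₂ : (2 : ℝ) ≤ A.ncard := ((div_le_iff₀' hδ).1 hnδ).trans hA
  have hK : K ≤ δ ^ 2 / 4 * (p n * n) := by
    calc K = δ ^ 2 / 4 * (4 * K / δ ^ 2) := by field_simp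
      _ ≤ δ ^ 2 / 4 * (p n * n) := by gcongr; exact hpn.trans (by gcongr)
  calc K * n ≤ δ ^ 2 / 4 * (p n * n) * n := by gcongr
    _ = (δ * n) * (δ * n) / 4 * p n := by ring
    _ ≤ A.ncard * A.ncard / 4 * p n := by gcongr
    _ ≤ A.ncard * (A.ncard - 1) / 2 * p n := by gcongr ?_ * _; nlinarith
    _ = A.ncard.choose 2 * p n := by rw [Nat.cast_choose_two]

lemma eventually_mul_le_ncard_mul_ncard_of_log_le
    (hp : Tendsto (fun n : ℕ ↦ (p n : ℝ) ^ 3 * Real.log n) atTop atTop) {C : ℝ} (hC : 0 < C)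
    (K : ℝ) :
    ∀ᶠ n : ℕ in atTop, ∀ A B : Set (Fin n),
      C * Real.log n ≤ A.ncard ∧ n * (p n : ℝ) ^ 2 ≤ B.ncard →
        K * n ≤ A.ncard * B.ncard * p n := by
  filter_upwards [hp.eventually_ge_atTop (K / C)] with n hpn A B ⟨hA, hB⟩
  have hp₀ : 0 ≤ (p n : ℝ) := (p n).2.1
  calc K * n ≤ (p n : ℝ) ^ 3 * Real.log n * C * n := by gcongr; exact (div_le_iff₀ hC).1 hpn
    _ = C * Real.log n * (n * (p n : ℝ) ^ 2) * p n := by ring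
    _ ≤ A.ncard * B.ncard * p n := by gcongr

lemma eventually_mul_le_ncard_mul_ncard_of_rpow_le
    (hp : Tendsto (fun n : ℕ ↦ p n * √n) atTop atTop) (K : ℝ) :
    ∀ᶠ n : ℕ in atTop, ∀ A B : Set (Fin n),
      (n : ℝ) ^ ((3 : ℝ) / 4) ≤ A.ncard ∧ (n : ℝ) ^ ((3 : ℝ) / 4) ≤ B.ncard →
        K * n ≤ A.ncard * B.ncard * p n := by
  filter_upwards [hp.eventually_ge_atTop K, eventually_gt_atTop 0] with n hpn hn A B ⟨hA, hB⟩
  have hp₀ : 0 ≤ (p n : ℝ) := (p n).2.1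
  have hpow : (n : ℝ) ^ ((3 : ℝ) / 4) * (n : ℝ) ^ ((3 : ℝ) / 4) = √n * n := by
    rw [Real.sqrt_eq_rpow, ← Real.rpow_add (by positivity), ← Real.rpow_add_one (by positivity)]
    norm_num
  calc K * n ≤ p n * √n * n := by gcongr
    _ = (n : ℝ) ^ ((3 : ℝ) / 4) * (n : ℝ) ^ ((3 : ℝ) / 4) * p n := by rw [hpow]; ring
    _ ≤ A.ncard * B.ncard * p n := by gcongr

end Pseudorandomness

theorem stmt_17_general (p : ℕ → ℝ) (hp : ∀ n, p n ∈ Set.Icc (0 : ℝ) 1)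
    (hgrow : Tendsto (fun n : ℕ ↦ p n * Real.log n ^ ((1 : ℝ) / 3)) atTop atTop)
    {C δ : ℝ} (hC : 0 < C) (hδ : 0 < δ) :
    Tendsto (fun n ↦ gnpProb n (p n) (fun G ↦
      (∀ v, (1 - δ) * n * p n ≤ ((G.neighborSet v).ncard : ℝ) ∧
        ((G.neighborSet v).ncard : ℝ) ≤ (1 + δ) * n * p n) ∧
      (∀ A : Set (Fin n), δ * n ≤ (A.ncard : ℝ) →
        (1 - δ) * (Nat.choose A.ncard 2 : ℝ) * p n ≤ (eIn G A : ℝ) ∧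
        (eIn G A : ℝ) ≤ (1 + δ) * (Nat.choose A.ncard 2 : ℝ) * p n) ∧
      (∀ A B : Set (Fin n), Disjoint A B → C * Real.log n ≤ (A.ncard : ℝ) →
        (n : ℝ) * p n ^ 2 ≤ (B.ncard : ℝ) →
        (1 - δ) * A.ncard * B.ncard * p n ≤ (eBtw G A B : ℝ) ∧
        (eBtw G A B : ℝ) ≤ (1 + δ) * A.ncard * B.ncard * p n) ∧
      (∀ A B : Set (Fin n), Disjoint A B → (n : ℝ) ^ ((3 : ℝ) / 4) ≤ (A.ncard : ℝ) →
        (n : ℝ) ^ ((3 : ℝ) / 4) ≤ (B.ncard : ℝ) →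
        (1 - δ) * A.ncard * B.ncard * p n ≤ (eBtw G A B : ℝ) ∧
        (eBtw G A B : ℝ) ≤ (1 + δ) * A.ncard * B.ncard * p n)))
      atTop (𝓝 1) := by
  have hcube := tendsto_cube_mul_log_of_tendsto_mul_log_rpow hgrow
  have hsqrt := tendsto_mul_sqrt_of_tendsto_mul_log_rpow (fun n ↦ (hp n).1) hgrow
  lift p to ℕ → I using hp
  have hdeg := asympAlmostSurely_withinFactor_ncard_neighborSet hsqrt hδ
  have hin := asympAlmostSurely_withinFactor_eIn hδ (eventually_mul_le_choose_two_mul hsqrt hδ)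
  have hlog := asympAlmostSurely_withinFactor_eBtw hδ
    (eventually_mul_le_ncard_mul_ncard_of_log_le hcube hC)
  have hpow := asympAlmostSurely_withinFactor_eBtw hδ
    (eventually_mul_le_ncard_mul_ncard_of_rpow_le hsqrt)
  have hall := (hdeg.and (hin.and (hlog.and hpow))).tendsto_measureReal fun _ ↦ .of_discrete
  simpa only [gnpProb_eq_measureReal_binomialRandom, WithinFactor, mul_assoc, and_imp] using hall

/-- under the stated conditions on `p = p(n)` (with `δ = ε/5`), there is
`C = C(ε) > 0` such that a.a.s. `G(n,p)` satisfies properties (a)-(d) of Claim 5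
(degrees, internal edge counts and cross edge counts are as expected up to a factor
`1 ± δ`). -/
theorem stmt_17 (p : ℕ → ℝ) (hp : ∀ n, p n ∈ Set.Icc (0 : ℝ) 1)
    (hgrow : Tendsto (fun n : ℕ => p n * Real.log n ^ ((1 : ℝ)/3)) atTop atTop)
    (hlim : limsup p atTop < 1/2)
    (ε : ℝ) (hε : 0 < ε) (hpε : ∀ᶠ n : ℕ in atTop, p n ≤ 1/2 - ε)
    (δ : ℝ) (hδ : δ = ε / 5) :
    ∃ C > (0 : ℝ), Tendsto (fun n => gnpProb n (p n) (fun G =>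
      (∀ v, (1 - δ) * n * p n ≤ ((G.neighborSet v).ncard : ℝ) ∧
        ((G.neighborSet v).ncard : ℝ) ≤ (1 + δ) * n * p n) ∧
      (∀ A : Set (Fin n), δ * n ≤ (A.ncard : ℝ) →
        (1 - δ) * (Nat.choose A.ncard 2 : ℝ) * p n ≤ (eIn G A : ℝ) ∧
        (eIn G A : ℝ) ≤ (1 + δ) * (Nat.choose A.ncard 2 : ℝ) * p n) ∧
      (∀ A B : Set (Fin n), Disjoint A B → C * Real.log n ≤ (A.ncard : ℝ) →
        (n : ℝ) * (p n)^2 ≤ (B.ncard : ℝ) →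
        (1 - δ) * A.ncard * B.ncard * p n ≤ (eBtw G A B : ℝ) ∧
        (eBtw G A B : ℝ) ≤ (1 + δ) * A.ncard * B.ncard * p n) ∧
      (∀ A B : Set (Fin n), Disjoint A B → (n : ℝ) ^ ((3 : ℝ)/4) ≤ (A.ncard : ℝ) →
        (n : ℝ) ^ ((3 : ℝ)/4) ≤ (B.ncard : ℝ) →
        (1 - δ) * A.ncard * B.ncard * p n ≤ (eBtw G A B : ℝ) ∧
        (eBtw G A B : ℝ) ≤ (1 + δ) * A.ncard * B.ncard * p n)))
      atTop (nhds 1) :=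
  ⟨1, one_pos, stmt_17_general p hp hgrow one_pos (by rw [hδ]; positivity)⟩
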